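/- Let α > −1 be a real number and let k be a nonzero real number. Then lim_{ε→0⁺} ∫_0^∞ x^α · e^{−(ε + ik)x} dx = Γ(α+1) · (ik)^{−(α+1)}, where Γ is the Gamma function and (ik)^{−(α+1)} is the principal branch of the complex power (defined via the principal branch of the logarithm). -/

import Mathlib

open MeasureTheory Real Complex Filter Topology

/-! The Laplace transform of `x ^ a` is holomorphic on the open right half-plane and equals
`Γ(a + 1) z ^ (-(a + 1))` on the positive reals by the Gamma integral, hence on the whole half-plane
by the identity theorem. The right-hand side is continuous on the slit plane, which contains every
nonzero point `w` of the closed right half-plane, so one may let `z = ε + w` tend to `w`. -/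

section IdentityTheorem

variable {E : Type*} [NormedAddCommGroup E] [NormedSpace ℂ E] [CompleteSpace E]

lemma eqOn_of_preconnected_of_eventuallyEq_ofReal {f g : ℂ → E} {U : Set ℂ} {r : ℝ}
    (hf : DifferentiableOn ℂ f U) (hg : DifferentiableOn ℂ g U) (hU : IsOpen U)
    (hU' : IsPreconnected U) (hr : (r : ℂ) ∈ U) (hfg : ∀ᶠ t : ℝ in 𝓝 r, f t = g t) :
    Set.EqOn f g U := by
  have ofReal_punctured : Tendsto ((↑) : ℝ → ℂ) (𝓝[≠] r) (𝓝[≠] (r : ℂ)) :=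
    continuous_ofReal.continuousAt.continuousWithinAt.tendsto_nhdsWithin
      fun _ ht => ofReal_injective.ne ht
  exact (hf.analyticOnNhd hU).eqOn_of_preconnected_of_frequently_eq (hg.analyticOnNhd hU) hU' hr
    (ofReal_punctured.frequently (hfg.filter_mono nhdsWithin_le_nhds).frequently)

end IdentityTheorem

section LaplaceTransform

variable {E : Type*} [NormedAddCommGroup E] [NormedSpace ℂ E] {f : ℝ → E} {s z : ℂ}

/-- Absolute convergence at `s` of the integral defining `laplaceTransform f s`. -/
def LaplaceConvergent (f : ℝ → E) (s : ℂ) : Prop :=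
  IntegrableOn (fun x : ℝ => cexp (-s * x) • f x) (Set.Ioi 0)

/-- The one-sided Laplace transform `s ↦ ∫_0^∞ e^{-sx} f(x) dx`. As a Bochner integral, it takes
the value `0` at those `s` where `LaplaceConvergent f s` fails. -/
noncomputable def laplaceTransform (f : ℝ → E) (s : ℂ) : E :=
  ∫ x : ℝ in Set.Ioi 0, cexp (-s * x) • f x

lemma norm_cexp_neg_mul_ofReal (s : ℂ) (x : ℝ) : ‖cexp (-s * x)‖ = rexp (-(s.re * x)) := by
  simp [Complex.norm_exp]

lemma laplaceTransform_exp_smul (f : ℝ → E) (s z : ℂ) :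
    laplaceTransform (fun x : ℝ => cexp (-s * x) • f x) (z - s) = laplaceTransform f z := by
  simp only [laplaceTransform, smul_smul, ← Complex.exp_add]
  ring_nf

lemma laplaceConvergent_of_integrableOn (hf : IntegrableOn f (Set.Ioi 0)) (hz : 0 ≤ z.re) :
    LaplaceConvergent f z := by
  refine hf.bdd_smul 1 (Continuous.aestronglyMeasurable (by fun_prop)) ?_
  filter_upwards [ae_restrict_mem measurableSet_Ioi] with x (hx : 0 < x)
  rw [norm_cexp_neg_mul_ofReal, Real.exp_le_one_iff, neg_nonpos]
  positivity

lemma mul_exp_neg_mul_le_inv {b c x : ℝ} (hb : 0 < b) (hbc : b ≤ c) (hx : 0 ≤ x) :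
    x * rexp (-(c * x)) ≤ b⁻¹ := by
  rw [Real.exp_neg, ← div_eq_mul_inv, div_le_iff₀ (Real.exp_pos _), le_inv_mul_iff₀ hb]
  calc b * x ≤ c * x := by gcongr
    _ ≤ rexp (c * x) := by linarith [Real.add_one_le_exp (c * x)]

lemma differentiableAt_laplaceTransform_of_integrableOn (hf : IntegrableOn f (Set.Ioi 0))
    (hz : 0 < z.re) : DifferentiableAt ℂ (laplaceTransform f) z := by
  have half_re_nhds : {w : ℂ | z.re / 2 < w.re} ∈ 𝓝 z :=
    (isOpen_lt continuous_const Complex.continuous_re).mem_nhds (half_lt_self hz)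
  refine (hasDerivAt_integral_of_dominated_loc_of_deriv_le
    (F := fun w (x : ℝ) => cexp (-w * x) • f x)
    (F' := fun w (x : ℝ) => (cexp (-w * x) * -x) • f x)
    (bound := fun x => (z.re / 2)⁻¹ * ‖f x‖) half_re_nhds
    (.of_forall fun w => ?_) (laplaceConvergent_of_integrableOn hf hz.le) ?_ ?_
    (hf.norm.const_mul _) (.of_forall fun x w _ => ?_)).2.differentiableAt
  · exact (Continuous.aestronglyMeasurable (by fun_prop)).smul hf.aestronglyMeasurable
  · exact (Continuous.aestronglyMeasurable (by fun_prop)).smul hf.aestronglyMeasurable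
  · filter_upwards [ae_restrict_mem measurableSet_Ioi] with x (hx : 0 < x) w hw
    rw [norm_smul, norm_mul, norm_cexp_neg_mul_ofReal, norm_neg, Complex.norm_of_nonneg hx.le,
      mul_comm (rexp _)]
    gcongr
    exact mul_exp_neg_mul_le_inv (half_pos hz) (le_of_lt hw) hx.le
  · simpa using (((hasDerivAt_id w).neg.mul_const (x : ℂ)).cexp).smul_const (f x)

lemma LaplaceConvergent.differentiableAt (hf : LaplaceConvergent f s) (hsz : s.re < z.re) :
    DifferentiableAt ℂ (laplaceTransform f) z := by
  have shifted : DifferentiableAt ℂ (laplaceTransform fun x : ℝ => cexp (-s * x) • f x) (z - s) :=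
    differentiableAt_laplaceTransform_of_integrableOn hf (by simpa using hsz)
  simpa only [Function.comp_def, id_eq, laplaceTransform_exp_smul] using
    shifted.comp z (differentiableAt_id.sub_const s)

end LaplaceTransform

section Power

variable {a z w : ℂ}

lemma laplaceConvergent_cpow_ofReal (ha : -1 < a.re) {r : ℝ} (hr : 0 < r) :
    LaplaceConvergent (fun x : ℝ => (x : ℂ) ^ a) r := by
  have ha' : 0 < (a + 1).re := by simpa using neg_lt_iff_pos_add.1 ha
  have gamma_convergent : MellinConvergent (fun x : ℝ => (rexp (-x) : ℂ)) (a + 1) := by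
    simpa only [MellinConvergent, smul_eq_mul, mul_comm] using Complex.GammaIntegral_convergent ha'
  simpa [MellinConvergent, LaplaceConvergent, mul_comm] using
    (MellinConvergent.comp_mul_left hr).2 gamma_convergent

lemma laplaceTransform_cpow_ofReal (ha : -1 < a.re) {r : ℝ} (hr : 0 < r) :
    laplaceTransform (fun x : ℝ => (x : ℂ) ^ a) r = Complex.Gamma (a + 1) * r ^ (-(a + 1)) := by
  have ha' : 0 < (a + 1).re := by simpa using neg_lt_iff_pos_add.1 ha
  have hr' : (r : ℂ).arg ≠ π := by simpa [Complex.arg_ofReal_of_nonneg hr.le] using pi_ne_zero.symm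
  calc laplaceTransform (fun x : ℝ => (x : ℂ) ^ a) r
      = ∫ x : ℝ in Set.Ioi 0, (x : ℂ) ^ (a + 1 - 1) * cexp (-(r * x)) := by
        simp only [laplaceTransform, smul_eq_mul, add_sub_cancel_right, neg_mul, mul_comm (cexp _)]
    _ = (1 / r) ^ (a + 1) * Complex.Gamma (a + 1) :=
        Complex.integral_cpow_mul_exp_neg_mul_Ioi ha' hr
    _ = Complex.Gamma (a + 1) * r ^ (-(a + 1)) := by
        rw [one_div, Complex.inv_cpow _ _ hr', ← Complex.cpow_neg, mul_comm]

lemma differentiableOn_laplaceTransform_cpow (ha : -1 < a.re) :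
    DifferentiableOn ℂ (laplaceTransform fun x : ℝ => (x : ℂ) ^ a) {z | 0 < z.re} :=
  fun _ (hz : 0 < _) => ((laplaceConvergent_cpow_ofReal ha (half_pos hz)).differentiableAt
    (by simpa only [ofReal_re] using half_lt_self hz)).differentiableWithinAt

theorem laplaceTransform_cpow (ha : -1 < a.re) (hz : 0 < z.re) :
    laplaceTransform (fun x : ℝ => (x : ℂ) ^ a) z = Complex.Gamma (a + 1) * z ^ (-(a + 1)) := by
  have differentiableOn_rhs :
      DifferentiableOn ℂ (fun z => Complex.Gamma (a + 1) * z ^ (-(a + 1))) {z | 0 < z.re} :=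
    fun z hz => ((differentiableAt_id.cpow_const (Or.inl hz)).const_mul _).differentiableWithinAt
  have eventually_eq_near_one : ∀ᶠ r : ℝ in 𝓝 1, laplaceTransform (fun x : ℝ => (x : ℂ) ^ a) r =
      Complex.Gamma (a + 1) * r ^ (-(a + 1)) :=
    (eventually_gt_nhds one_pos).mono fun _ => laplaceTransform_cpow_ofReal ha
  exact eqOn_of_preconnected_of_eventuallyEq_ofReal (differentiableOn_laplaceTransform_cpow ha)
    differentiableOn_rhs (isOpen_lt continuous_const Complex.continuous_re)
    (convex_halfSpace_re_gt 0).isPreconnected (by simp) eventually_eq_near_one hz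

lemma mem_slitPlane_of_re_nonneg (hw : 0 ≤ w.re) (hw₀ : w ≠ 0) : w ∈ slitPlane := by
  rw [mem_slitPlane_iff]
  by_contra! h
  exact hw₀ (Complex.ext (le_antisymm h.1 hw) h.2)

theorem stmt_10_general (ha : -1 < a.re) (hw : 0 ≤ w.re) (hw₀ : w ≠ 0) :
    Tendsto (fun ε : ℝ => ∫ x in Set.Ioi (0 : ℝ), (x : ℂ) ^ a * cexp (-((ε : ℂ) + w) * x))
      (𝓝[>] 0) (𝓝 (Complex.Gamma (a + 1) * w ^ (-(a + 1)))) := by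
  have add_w_tendsto : Tendsto (fun ε : ℝ => (ε : ℂ) + w) (𝓝[>] 0) (𝓝 w) :=
    (Continuous.tendsto' (by fun_prop) 0 w (by simp)).mono_left nhdsWithin_le_nhds
  have rhs_tendsto := (add_w_tendsto.cpow (tendsto_const_nhds (x := -(a + 1)))
    (mem_slitPlane_of_re_nonneg hw hw₀)).const_mul (Complex.Gamma (a + 1))
  refine rhs_tendsto.congr' ?_
  filter_upwards [self_mem_nhdsWithin] with ε (hε : 0 < ε)
  have re_pos : 0 < ((ε : ℂ) + w).re := by simpa using add_pos_of_pos_of_nonneg hε hw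
  simp only [← laplaceTransform_cpow ha re_pos, laplaceTransform, smul_eq_mul, mul_comm]

end Power

theorem stmt_10 (α : ℝ) (hα : -1 < α) (k : ℝ) (hk : k ≠ 0) :
    Filter.Tendsto
      (fun ε : ℝ => ∫ x in Set.Ioi (0 : ℝ),
        ((x ^ α : ℝ) : ℂ) * Complex.exp (-((ε : ℂ) + Complex.I * k) * x))
      (nhdsWithin 0 (Set.Ioi 0))
      (nhds (Complex.Gamma ((α : ℂ) + 1) * (Complex.I * k) ^ (-((α : ℂ) + 1)))) := by
  refine (stmt_10_general (a := α) (w := I * k) hα (by simp) (by simpa using hk)).congr fun ε =>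
    setIntegral_congr_fun measurableSet_Ioi fun x (hx : 0 < x) => ?_
  simp only [Complex.ofReal_cpow hx.le]
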